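/- Let S > 0, 0 < δ₁ < S, δ₂ > 0, r > 0, κ₀ ≥ 0. Let χ : [0,S] × ∂Ω → [0,∞) be continuous with χ(t,x) = δ₂ for all (t,x) ∈ [δ₁,S] × ∂Ω. Let F : [0,S] × cl(Ω) × ℝ → ℝ be continuous, twice continuously differentiable in the last variable, with: F(t,x,0) = 0; ∂²_uF(t,x,u) ≤ 0 for u ≥ 0 and ∂²_uF(t,x,u) ≥ 0 for u ≤ 0; and ∂_uF(t,x,0) ≤ κ₀ for all (t,x). Suppose that for each λ ∈ [−r,r] there are functions v_λ, v⁽¹⁾_λ, v⁽²⁾_λ : [0,S] × cl(Ω) → ℝ such that, setting V_λ(t,x) := ∂_uF(t,x,v_λ(t,x)): v_λ is a classical solution of ∂_t v − Δv + F(t,x,v) = 0 in (0,S) × Ω with lateral boundary values λχ and zero initial values, v_0 ≡ 0; v⁽¹⁾_λ is a classical solution of ∂_t u − Δu + V_λ u = 0 with lateral boundary values χ and zero initial values; v⁽²⁾_λ is a classical solution of ∂_t u − Δu + V_λ u = −∂²_uF(t,x,v_λ(t,x)) (v⁽¹⁾_λ(t,x))² with zero lateral boundary values and zero initial values; and for each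 (t,x), λ ↦ v_λ(t,x) is continuous on [−r,r] and differentiable on (−r,r) with derivative v⁽¹⁾_λ(t,x), and λ ↦ v⁽¹⁾_λ(t,x) is differentiable on (−r,r) with derivative v⁽²⁾_λ(t,x). Let y be a classical solution of ∂_t y − Δy + κ₀ y = 0 in (0,S) × Ω with lateral boundary values χ and zero initial values, and set a₂ := inf { y(t,x) : (t,x) ∈ [δ₁,S] × cl(Ω) }. Then a₂ > 0 and, for every (t,x) ∈ (δ₁,S) × Ω and every s ∈ [−a₂ r, a₂ r], there exists λ ∈ [−r,r] such that v_λ(t,x) = s. -/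

import Mathlib

open Set

namespace Paper

noncomputable section

/-- Time derivative `∂ₜu`. -/
def timeDeriv {n : ℕ} (u : ℝ → (Fin n → ℝ) → ℝ) (t : ℝ) (x : Fin n → ℝ) : ℝ :=
  deriv (fun s => u s x) t

/-- Spatial partial derivative `∂ᵢu`. -/
def spatialDeriv {n : ℕ} (u : ℝ → (Fin n → ℝ) → ℝ) (i : Fin n) (t : ℝ) (x : Fin n → ℝ) : ℝ :=
  deriv (fun s => u t (Function.update x i s)) (x i)

/-- Second spatial partial derivative `∂ᵢ∂ⱼu`. -/
def spatialDeriv2 {n : ℕ} (u : ℝ → (Fin n → ℝ) → ℝ) (i j : Fin n) (t : ℝ)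
    (x : Fin n → ℝ) : ℝ :=
  spatialDeriv (spatialDeriv u j) i t x

/-- Laplacian in the space variables. -/
def laplacian {n : ℕ} (u : ℝ → (Fin n → ℝ) → ℝ) (t : ℝ) (x : Fin n → ℝ) : ℝ :=
  ∑ i, spatialDeriv2 u i i t x

/-- Parabolic regularity: `u` is continuous on `[0,S] × cl Ω`, and `∂ₜu` together with all
spatial partial derivatives of `u` up to order 2 exist and are continuous on `(0,S) × Ω`. -/
structure ParabolicRegular {n : ℕ} (Ω : Set (Fin n → ℝ)) (S : ℝ)
    (u : ℝ → (Fin n → ℝ) → ℝ) : Prop where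
  cont : ContinuousOn (fun p : ℝ × (Fin n → ℝ) => u p.1 p.2) (Icc 0 S ×ˢ closure Ω)
  diff_t : ∀ t ∈ Ioo 0 S, ∀ x ∈ Ω, DifferentiableAt ℝ (fun s => u s x) t
  diff_x : ∀ t ∈ Ioo 0 S, ∀ x ∈ Ω, ∀ i,
    DifferentiableAt ℝ (fun s => u t (Function.update x i s)) (x i)
  diff_xx : ∀ t ∈ Ioo 0 S, ∀ x ∈ Ω, ∀ i j,
    DifferentiableAt ℝ (fun s => spatialDeriv u j t (Function.update x i s)) (x i)
  cont_t : ContinuousOn (fun p : ℝ × (Fin n → ℝ) => timeDeriv u p.1 p.2) (Ioo 0 S ×ˢ Ω)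
  cont_x : ∀ i, ContinuousOn (fun p : ℝ × (Fin n → ℝ) => spatialDeriv u i p.1 p.2)
    (Ioo 0 S ×ˢ Ω)
  cont_xx : ∀ i j, ContinuousOn (fun p : ℝ × (Fin n → ℝ) => spatialDeriv2 u i j p.1 p.2)
    (Ioo 0 S ×ˢ Ω)

/-- Classical solution of `∂ₜu − Δu + c u = f` in `(0,S) × Ω` with lateral boundary values `g`
and zero initial values. -/
structure IsClassicalSolution {n : ℕ} (Ω : Set (Fin n → ℝ)) (S : ℝ)
    (c f g u : ℝ → (Fin n → ℝ) → ℝ) extends ParabolicRegular Ω S u : Prop where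
  eqn : ∀ t ∈ Ioo 0 S, ∀ x ∈ Ω, timeDeriv u t x - laplacian u t x + c t x * u t x = f t x
  lateral : ∀ t ∈ Icc 0 S, ∀ x ∈ frontier Ω, u t x = g t x
  initial : ∀ x ∈ closure Ω, u 0 x = 0

/-- `∂_u F` for a semilinear term `F(t,x,u)`. -/
def uDeriv {n : ℕ} (F : ℝ → (Fin n → ℝ) → ℝ → ℝ) (t : ℝ) (x : Fin n → ℝ) (u : ℝ) : ℝ :=
  deriv (F t x) u

/-- `∂_u² F`. -/
def uDeriv2 {n : ℕ} (F : ℝ → (Fin n → ℝ) → ℝ → ℝ) : ℝ → (Fin n → ℝ) → ℝ → ℝ :=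
  uDeriv (uDeriv F)

/-- `∂_u³ F`. -/
def uDeriv3 {n : ℕ} (F : ℝ → (Fin n → ℝ) → ℝ → ℝ) : ℝ → (Fin n → ℝ) → ℝ → ℝ :=
  uDeriv (uDeriv2 F)

/-- `∂_u⁴ F`. -/
def uDeriv4 {n : ℕ} (F : ℝ → (Fin n → ℝ) → ℝ → ℝ) : ℝ → (Fin n → ℝ) → ℝ → ℝ :=
  uDeriv (uDeriv3 F)

/-- `∂ₜF` for `F` depending on `(t,x,u)`. -/
def FtDeriv {n : ℕ} (F : ℝ → (Fin n → ℝ) → ℝ → ℝ) (t : ℝ) (x : Fin n → ℝ) (u : ℝ) : ℝ :=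
  deriv (fun s => F s x u) t

/-- `∂_{xᵢ}F` for `F` depending on `(t,x,u)`. -/
def FxDeriv {n : ℕ} (F : ℝ → (Fin n → ℝ) → ℝ → ℝ) (i : Fin n) (t : ℝ) (x : Fin n → ℝ)
    (u : ℝ) : ℝ :=
  deriv (fun s => F t (Function.update x i s) u) (x i)

/-- `F` is continuous on `[0,S] × cl Ω × ℝ` and continuously differentiable in the last
variable. -/
def C1InU {n : ℕ} (Ω : Set (Fin n → ℝ)) (S : ℝ) (F : ℝ → (Fin n → ℝ) → ℝ → ℝ) : Prop :=
  ContinuousOn (fun p : ℝ × (Fin n → ℝ) × ℝ => F p.1 p.2.1 p.2.2)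
    (Icc 0 S ×ˢ closure Ω ×ˢ (univ : Set ℝ)) ∧
  (∀ t ∈ Icc 0 S, ∀ x ∈ closure Ω, ∀ u : ℝ, DifferentiableAt ℝ (F t x) u) ∧
  ContinuousOn (fun p : ℝ × (Fin n → ℝ) × ℝ => uDeriv F p.1 p.2.1 p.2.2)
    (Icc 0 S ×ˢ closure Ω ×ˢ (univ : Set ℝ))

/-- `F` is continuous and twice continuously differentiable in the last variable. -/
def C2InU {n : ℕ} (Ω : Set (Fin n → ℝ)) (S : ℝ) (F : ℝ → (Fin n → ℝ) → ℝ → ℝ) : Prop :=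
  C1InU Ω S F ∧
  (∀ t ∈ Icc 0 S, ∀ x ∈ closure Ω, ∀ u : ℝ, DifferentiableAt ℝ (uDeriv F t x) u) ∧
  ContinuousOn (fun p : ℝ × (Fin n → ℝ) × ℝ => uDeriv2 F p.1 p.2.1 p.2.2)
    (Icc 0 S ×ˢ closure Ω ×ˢ (univ : Set ℝ))

/-- `‖f‖_{W^{1,∞}} ≤ B` on `[0,S] × cl Ω`, stated componentwise: `f`, `∂ₜf` and all `∂ᵢf`
are bounded by `B` in absolute value. -/
def W1infLE {n : ℕ} (Ω : Set (Fin n → ℝ)) (S : ℝ) (f : ℝ → (Fin n → ℝ) → ℝ) (B : ℝ) : Prop :=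
  ∀ t ∈ Icc 0 S, ∀ x ∈ closure Ω,
    |f t x| ≤ B ∧ |timeDeriv f t x| ≤ B ∧ ∀ i, |spatialDeriv f i t x| ≤ B

/-- `f` has bounded continuous first-order derivatives on `[0,S] × cl Ω`. -/
def C1Bounded {n : ℕ} (Ω : Set (Fin n → ℝ)) (S : ℝ) (f : ℝ → (Fin n → ℝ) → ℝ) : Prop :=
  (∀ t ∈ Icc 0 S, ∀ x ∈ closure Ω, DifferentiableAt ℝ (fun s => f s x) t ∧
    ∀ i, DifferentiableAt ℝ (fun s => f t (Function.update x i s)) (x i)) ∧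
  ContinuousOn (fun p : ℝ × (Fin n → ℝ) => f p.1 p.2) (Icc 0 S ×ˢ closure Ω) ∧
  ContinuousOn (fun p : ℝ × (Fin n → ℝ) => timeDeriv f p.1 p.2) (Icc 0 S ×ˢ closure Ω) ∧
  (∀ i, ContinuousOn (fun p : ℝ × (Fin n → ℝ) => spatialDeriv f i p.1 p.2)
    (Icc 0 S ×ˢ closure Ω)) ∧
  ∃ B, W1infLE Ω S f B

/-- Componentwise bound `‖f‖_* ≤ ε` for the parabolic Schauder norm of
`C([0,S];C^{2+α}(cl Ω)) ∩ C^{1+α/2}([0,S];C(cl Ω))`: sup bounds on `f`, `∂ₜf`, spatial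
derivatives up to order 2, the `α`-Hölder (in `x`) seminorms of the second spatial derivatives,
and the `α/2`-Hölder (in `t`) seminorm of `∂ₜf`. -/
def SchauderLE {n : ℕ} (α : ℝ) (Ω : Set (Fin n → ℝ)) (S : ℝ) (f : ℝ → (Fin n → ℝ) → ℝ)
    (ε : ℝ) : Prop :=
  (∀ t ∈ Icc 0 S, ∀ x ∈ closure Ω,
    |f t x| ≤ ε ∧ |timeDeriv f t x| ≤ ε ∧ (∀ i, |spatialDeriv f i t x| ≤ ε) ∧
    ∀ i j, |spatialDeriv2 f i j t x| ≤ ε) ∧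
  (∀ t ∈ Icc 0 S, ∀ x ∈ closure Ω, ∀ x' ∈ closure Ω, ∀ i j,
    |spatialDeriv2 f i j t x - spatialDeriv2 f i j t x'| ≤ ε * dist x x' ^ α) ∧
  (∀ x ∈ closure Ω, ∀ t ∈ Icc 0 S, ∀ t' ∈ Icc 0 S,
    |timeDeriv f t x - timeDeriv f t' x| ≤ ε * |t - t'| ^ (α / 2))

/-- `G`, `∂ₜG` and the `∂_{xᵢ}G` exist and are continuous on `[0,S] × cl Ω × ℝ`. -/
def C1InTX {n : ℕ} (Ω : Set (Fin n → ℝ)) (S : ℝ) (G : ℝ → (Fin n → ℝ) → ℝ → ℝ) : Prop :=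
  (∀ t ∈ Icc 0 S, ∀ x ∈ closure Ω, ∀ u : ℝ,
    DifferentiableAt ℝ (fun s => G s x u) t ∧
    ∀ i, DifferentiableAt ℝ (fun s => G t (Function.update x i s) u) (x i)) ∧
  ContinuousOn (fun p : ℝ × (Fin n → ℝ) × ℝ => G p.1 p.2.1 p.2.2)
    (Icc 0 S ×ˢ closure Ω ×ˢ (univ : Set ℝ)) ∧
  ContinuousOn (fun p : ℝ × (Fin n → ℝ) × ℝ => FtDeriv G p.1 p.2.1 p.2.2)
    (Icc 0 S ×ˢ closure Ω ×ˢ (univ : Set ℝ)) ∧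
  ∀ i, ContinuousOn (fun p : ℝ × (Fin n → ℝ) × ℝ => FxDeriv G i p.1 p.2.1 p.2.2)
    (Icc 0 S ×ˢ closure Ω ×ˢ (univ : Set ℝ))

/-- `G`, `∂ₜG` and the `∂_{xᵢ}G` are bounded by `κ(|u|)` on `[0,S] × cl Ω`, for every `u`. -/
def BoundedByKappa {n : ℕ} (Ω : Set (Fin n → ℝ)) (S : ℝ) (G : ℝ → (Fin n → ℝ) → ℝ → ℝ)
    (κ : ℝ → ℝ) : Prop :=
  ∀ u : ℝ, ∀ t ∈ Icc 0 S, ∀ x ∈ closure Ω,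
    |G t x u| ≤ κ |u| ∧ |FtDeriv G t x u| ≤ κ |u| ∧ ∀ i, |FxDeriv G i t x u| ≤ κ |u|

/-- The family of solutions of the semilinear problem with boundary data `λχ`, together with
its first and second linearizations in the boundary parameter `λ`. -/
structure SemilinearFamily {n : ℕ} (Ω : Set (Fin n → ℝ)) (S r : ℝ)
    (χ : ℝ → (Fin n → ℝ) → ℝ) (F : ℝ → (Fin n → ℝ) → ℝ → ℝ)
    (v v1 v2 : ℝ → ℝ → (Fin n → ℝ) → ℝ) : Prop where
  sol : ∀ lam ∈ Icc (-r) r, IsClassicalSolution Ω S (fun _ _ => (0 : ℝ))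
      (fun t x => -F t x (v lam t x)) (fun t x => lam * χ t x) (v lam)
  zero : ∀ t ∈ Icc 0 S, ∀ x ∈ closure Ω, v 0 t x = 0
  lin1 : ∀ lam ∈ Icc (-r) r, IsClassicalSolution Ω S
      (fun t x => uDeriv F t x (v lam t x)) (fun _ _ => (0 : ℝ)) χ (v1 lam)
  lin2 : ∀ lam ∈ Icc (-r) r, IsClassicalSolution Ω S
      (fun t x => uDeriv F t x (v lam t x))
      (fun t x => -uDeriv2 F t x (v lam t x) * (v1 lam t x) ^ 2) (fun _ _ => (0 : ℝ)) (v2 lam)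
  cont_lam : ∀ t ∈ Icc 0 S, ∀ x ∈ closure Ω, ContinuousOn (fun lam => v lam t x) (Icc (-r) r)
  deriv1 : ∀ t ∈ Icc 0 S, ∀ x ∈ closure Ω, ∀ lam ∈ Ioo (-r) r,
      HasDerivAt (fun μ => v μ t x) (v1 lam t x) lam
  deriv2 : ∀ t ∈ Icc 0 S, ∀ x ∈ closure Ω, ∀ lam ∈ Ioo (-r) r,
      HasDerivAt (fun μ => v1 μ t x) (v2 lam t x) lam

end

end Paper

open Paper Set

/-!
Everything rests on the parabolic minimum principle. It yields the comparison principle for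
`∂ₜu − Δu + F(t,x,u)` with `F` locally Lipschitz in `u`. If `F(t,x,·)` lies below the line
`u ↦ κ₀ u` on `[0,∞)` and above it on `(−∞,0]`, then `r y` is a subsolution and `−r y` a
supersolution of the semilinear equation, so `v_{−r} ≤ −r y ≤ r y ≤ v_r`, and the intermediate
value theorem in `λ` produces every value in between. For `F` as in the paper, the sign of `∂ᵤ²F`
makes `∂ᵤF` largest at `u = 0`, which gives `F` its position relative to the line.

The infimum of `y` is positive because `y` dominates a small multiple of the solution
`e^{−κ₀t}(e^{λ²t + λxᵢ} − e^c)` of the same equation. Its positivity set is the half-space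
`λ²t + λxᵢ > c`. For large `λ` one can choose `c` so that, over `Ω`, this half-space lies in the
time range where `χ` is bounded below by a positive number and still contains all times `t ≥ δ₁`.
-/

namespace Paper

open Filter Topology
open scoped NNReal

section OneVariable

variable {f : ℝ → ℝ} {x : ℝ}

theorem deriv_deriv_nonneg_of_isLocalMin (hf : IsLocalMin f x) (hc : ContinuousAt f x) :
    0 ≤ deriv (deriv f) x := by
  by_contra! hneg
  have hmax := isLocalMax_of_deriv_deriv_neg hneg hf.deriv_eq_zero hc
  have hconst : f =ᶠ[𝓝 x] fun _ => f x := by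
    filter_upwards [hf, hmax] with y hmin hmax using le_antisymm hmax hmin
  rw [hconst.deriv.deriv_eq] at hneg
  simp at hneg

theorem hasDerivWithinAt_nonpos_of_isMinOn_Icc_right {f' a : ℝ} (hax : a < x)
    (hmin : IsMinOn f (Icc a x) x) (hf : HasDerivWithinAt f f' (Icc a x) x) : f' ≤ 0 := by
  have hcone : a - x ∈ posTangentConeAt (Icc a x) x :=
    sub_mem_posTangentConeAt_of_segment_subset (by rw [segment_symm, segment_eq_Icc hax.le])
  have hprod : 0 ≤ (a - x) * f' := by
    simpa using hmin.localize.hasFDerivWithinAt_nonneg hf.hasFDerivWithinAt hcone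
  exact nonpos_of_mul_nonneg_right hprod (sub_neg.2 hax)

theorem deriv_le_deriv_zero_of_deriv_deriv_sign (hf : Differentiable ℝ (deriv f))
    (hnonpos : ∀ u, 0 ≤ u → deriv (deriv f) u ≤ 0) (hnonneg : ∀ u, u ≤ 0 → 0 ≤ deriv (deriv f) u)
    (u : ℝ) : deriv f u ≤ deriv f 0 := by
  rcases le_total 0 u with hu | hu
  · exact antitoneOn_of_deriv_nonpos (convex_Ici 0) hf.continuous.continuousOn hf.differentiableOn
      (fun s hs => hnonpos s (interior_subset hs)) self_mem_Ici hu hu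
  · exact monotoneOn_of_deriv_nonneg (convex_Iic 0) hf.continuous.continuousOn hf.differentiableOn
      (fun s hs => hnonneg s (interior_subset (s := Iic 0) hs)) hu self_mem_Iic hu

/-- `f` lies below the line `u ↦ κ u` on `[0,∞)` and above it on `(-∞,0]`. This is how the growth
of the nonlinearity enters the comparison with solutions of the linear equation with potential
`κ`. -/
structure IsSectorBounded (κ : ℝ) (f : ℝ → ℝ) : Prop where
  le_mul : ∀ u, 0 ≤ u → f u ≤ κ * u
  mul_le : ∀ u, u ≤ 0 → κ * u ≤ f u

theorem IsSectorBounded.of_deriv_le {κ : ℝ} (hf : Differentiable ℝ f) (hf0 : f 0 = 0)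
    (hκ : ∀ u, deriv f u ≤ κ) : IsSectorBounded κ f where
  le_mul u hu := by simpa [hf0] using image_sub_le_mul_sub_of_deriv_le hf hκ hu
  mul_le u hu := by simpa [hf0] using image_sub_le_mul_sub_of_deriv_le hf hκ hu

end OneVariable

section HeatOperator

variable {n : ℕ} {Ω : Set (Fin n → ℝ)} {S : ℝ} {u w : ℝ → (Fin n → ℝ) → ℝ} {t : ℝ} {x : Fin n → ℝ}

/-- The heat operator `∂ₜ - Δ`. -/
noncomputable def heatOperator (u : ℝ → (Fin n → ℝ) → ℝ) (t : ℝ) (x : Fin n → ℝ) : ℝ :=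
  timeDeriv u t x - laplacian u t x

theorem IsClassicalSolution.heatOperator_eq {c f g : ℝ → (Fin n → ℝ) → ℝ}
    (hu : IsClassicalSolution Ω S c f g u) (ht : t ∈ Ioo 0 S) (hx : x ∈ Ω) :
    heatOperator u t x = f t x - c t x * u t x :=
  eq_sub_of_add_eq (hu.eqn t ht x hx)

theorem spatialDeriv_smul (c : ℝ) (u : ℝ → (Fin n → ℝ) → ℝ) (i : Fin n) :
    spatialDeriv (c • u) i = c • spatialDeriv u i := by
  ext t x
  exact deriv_const_mul_field c

theorem spatialDeriv2_smul (c : ℝ) (u : ℝ → (Fin n → ℝ) → ℝ) (i j : Fin n) :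
    spatialDeriv2 (c • u) i j = c • spatialDeriv2 u i j := by
  ext t x
  rw [spatialDeriv2, spatialDeriv_smul, spatialDeriv_smul]
  rfl

theorem timeDeriv_smul (c : ℝ) (u : ℝ → (Fin n → ℝ) → ℝ) :
    timeDeriv (c • u) = c • timeDeriv u := by
  ext t x
  exact deriv_const_mul_field c

theorem heatOperator_smul (c : ℝ) (u : ℝ → (Fin n → ℝ) → ℝ) (t : ℝ) (x : Fin n → ℝ) :
    heatOperator (c • u) t x = c * heatOperator u t x := by
  simp only [heatOperator, laplacian, timeDeriv_smul, spatialDeriv2_smul, Pi.smul_apply,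
    smul_eq_mul, mul_sub, Finset.mul_sum]

theorem ParabolicRegular.smul (hu : ParabolicRegular Ω S u) (c : ℝ) :
    ParabolicRegular Ω S (c • u) where
  cont := hu.cont.const_smul c
  diff_t t ht x hx := (hu.diff_t t ht x hx).const_smul c
  diff_x t ht x hx i := (hu.diff_x t ht x hx i).const_smul c
  diff_xx t ht x hx i j := by
    rw [spatialDeriv_smul]
    exact (hu.diff_xx t ht x hx i j).const_smul c
  cont_t := by
    rw [timeDeriv_smul]
    exact hu.cont_t.const_smul c
  cont_x i := by
    rw [spatialDeriv_smul]
    exact (hu.cont_x i).const_smul c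
  cont_xx i j := by
    rw [spatialDeriv2_smul]
    exact (hu.cont_xx i j).const_smul c

namespace ParabolicRegular

theorem timeDeriv_sub (hu : ParabolicRegular Ω S u) (hw : ParabolicRegular Ω S w)
    (ht : t ∈ Ioo 0 S) (hx : x ∈ Ω) :
    timeDeriv (u - w) t x = timeDeriv u t x - timeDeriv w t x :=
  deriv_fun_sub (hu.diff_t t ht x hx) (hw.diff_t t ht x hx)

theorem spatialDeriv_sub (hu : ParabolicRegular Ω S u) (hw : ParabolicRegular Ω S w)
    (ht : t ∈ Ioo 0 S) (hx : x ∈ Ω) (i : Fin n) :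
    spatialDeriv (u - w) i t x = spatialDeriv u i t x - spatialDeriv w i t x :=
  deriv_fun_sub (hu.diff_x t ht x hx i) (hw.diff_x t ht x hx i)

theorem eventuallyEq_spatialDeriv_sub (hu : ParabolicRegular Ω S u) (hw : ParabolicRegular Ω S w)
    (hΩ : IsOpen Ω) (ht : t ∈ Ioo 0 S) (hx : x ∈ Ω) (i j : Fin n) :
    (fun s => spatialDeriv (u - w) j t (Function.update x i s)) =ᶠ[𝓝 (x i)] fun s =>
      spatialDeriv u j t (Function.update x i s) - spatialDeriv w j t (Function.update x i s) := by
  have hcont : ContinuousAt (fun s => Function.update x i s) (x i) := by fun_prop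
  have hmem : ∀ᶠ s in 𝓝 (x i), Function.update x i s ∈ Ω :=
    hcont.eventually_mem (by simpa using hΩ.mem_nhds hx)
  filter_upwards [hmem] with s hs using hu.spatialDeriv_sub hw ht hs j

theorem spatialDeriv2_sub (hu : ParabolicRegular Ω S u) (hw : ParabolicRegular Ω S w)
    (hΩ : IsOpen Ω) (ht : t ∈ Ioo 0 S) (hx : x ∈ Ω) (i j : Fin n) :
    spatialDeriv2 (u - w) i j t x = spatialDeriv2 u i j t x - spatialDeriv2 w i j t x :=
  (hu.eventuallyEq_spatialDeriv_sub hw hΩ ht hx i j).deriv_eq.trans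
    (deriv_fun_sub (hu.diff_xx t ht x hx i j) (hw.diff_xx t ht x hx i j))

theorem heatOperator_sub (hu : ParabolicRegular Ω S u) (hw : ParabolicRegular Ω S w)
    (hΩ : IsOpen Ω) (ht : t ∈ Ioo 0 S) (hx : x ∈ Ω) :
    heatOperator (u - w) t x = heatOperator u t x - heatOperator w t x := by
  simp only [heatOperator, laplacian, hu.timeDeriv_sub hw ht hx,
    hu.spatialDeriv2_sub hw hΩ ht hx, Finset.sum_sub_distrib]
  ring

theorem sub (hu : ParabolicRegular Ω S u) (hw : ParabolicRegular Ω S w) (hΩ : IsOpen Ω) :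
    ParabolicRegular Ω S (u - w) where
  cont := hu.cont.sub hw.cont
  diff_t t ht x hx := (hu.diff_t t ht x hx).sub (hw.diff_t t ht x hx)
  diff_x t ht x hx i := (hu.diff_x t ht x hx i).sub (hw.diff_x t ht x hx i)
  diff_xx t ht x hx i j :=
    ((hu.diff_xx t ht x hx i j).sub (hw.diff_xx t ht x hx i j)).congr_of_eventuallyEq
      (hu.eventuallyEq_spatialDeriv_sub hw hΩ ht hx i j)
  cont_t := (hu.cont_t.sub hw.cont_t).congr fun _ hp => hu.timeDeriv_sub hw hp.1 hp.2
  cont_x i := ((hu.cont_x i).sub (hw.cont_x i)).congr fun _ hp =>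
    hu.spatialDeriv_sub hw hp.1 hp.2 i
  cont_xx i j := ((hu.cont_xx i j).sub (hw.cont_xx i j)).congr fun _ hp =>
    hu.spatialDeriv2_sub hw hΩ hp.1 hp.2 i j

end ParabolicRegular

end HeatOperator

section MinimumPrinciple

variable {n : ℕ} {Ω : Set (Fin n → ℝ)} {S : ℝ} {z : ℝ → (Fin n → ℝ) → ℝ}

theorem laplacian_nonneg_of_isLocalMin {t : ℝ} {x : Fin n → ℝ} (hmin : IsLocalMin (z t) x)
    (hc : ContinuousAt (z t) x) : 0 ≤ laplacian z t x := by
  refine Finset.sum_nonneg fun i _ => ?_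
  have hupdate : Continuous fun s => Function.update x i s := by fun_prop
  have hline_min : IsLocalMin (fun s => z t (Function.update x i s)) (x i) :=
    IsLocalMin.comp_continuous (by simpa using hmin) hupdate.continuousAt
  have hline_cont : ContinuousAt (fun s => z t (Function.update x i s)) (x i) :=
    ContinuousAt.comp' (by simpa using hc) hupdate.continuousAt
  simpa [spatialDeriv2, spatialDeriv] using deriv_deriv_nonneg_of_isLocalMin hline_min hline_cont

theorem timeDeriv_le_of_isMinOn_exp_mul {μ t : ℝ} {x : Fin n → ℝ} (ht : 0 < t)
    (hz : DifferentiableAt ℝ (fun s => z s x) t)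
    (hmin : IsMinOn (fun s => Real.exp (-(μ * s)) * z s x) (Icc 0 t) t) :
    timeDeriv z t x ≤ μ * z t x := by
  have hexp : HasDerivAt (fun s => Real.exp (-(μ * s))) (Real.exp (-(μ * t)) * -μ) t := by
    simpa using ((hasDerivAt_id t).const_mul μ).neg.exp
  have hderiv := hasDerivWithinAt_nonpos_of_isMinOn_Icc_right ht hmin
    (hexp.mul hz.hasDerivAt).hasDerivWithinAt
  have hfactor : Real.exp (-(μ * t)) * (timeDeriv z t x - μ * z t x) ≤ 0 := by
    unfold timeDeriv
    linarith
  exact sub_nonpos.1 (nonpos_of_mul_nonpos_right hfactor (Real.exp_pos _))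

theorem ParabolicRegular.heatOperator_le_of_isMinOn_exp_mul (hz : ParabolicRegular Ω S z)
    (hΩ : IsOpen Ω) {μ t : ℝ} {x : Fin n → ℝ} (ht : t ∈ Ioo 0 S) (hx : x ∈ Ω)
    (hmin : IsMinOn (fun p : ℝ × (Fin n → ℝ) => Real.exp (-(μ * p.1)) * z p.1 p.2)
      (Icc 0 t ×ˢ Ω) (t, x)) :
    heatOperator z t x ≤ μ * z t x := by
  have htime : timeDeriv z t x ≤ μ * z t x :=
    timeDeriv_le_of_isMinOn_exp_mul ht.1 (hz.diff_t t ht x hx) fun s hs =>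
      hmin (show (s, x) ∈ Icc 0 t ×ˢ Ω from ⟨hs, hx⟩)
  have hspace_min : IsLocalMin (z t) x := by
    filter_upwards [hΩ.mem_nhds hx] with x' hx'
    exact le_of_mul_le_mul_left
      (hmin (show (t, x') ∈ Icc 0 t ×ˢ Ω from ⟨right_mem_Icc.2 ht.1.le, hx'⟩)) (Real.exp_pos _)
  have hspace_cont : ContinuousOn (z t) Ω :=
    hz.cont.comp (f := fun x => (t, x)) (by fun_prop) fun x hx =>
      ⟨Ioo_subset_Icc_self ht, subset_closure hx⟩
  have hlap := laplacian_nonneg_of_isLocalMin hspace_min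
    (hspace_cont.continuousAt (hΩ.mem_nhds hx))
  unfold heatOperator
  linarith

namespace ParabolicRegular

/-- The weight `e^{-(K+1)t}` makes `∂ₜz - Δz ≤ (K+1)z < K z` at a negative interior minimum. The
terminal time is excluded because `∂ₜz` need not exist there. -/
theorem nonneg_of_heatOperator_ge_of_lt (hz : ParabolicRegular Ω S z) (hΩ : IsOpen Ω)
    (hΩb : Bornology.IsBounded Ω) {K : ℝ}
    (hheat : ∀ t ∈ Ioo 0 S, ∀ x ∈ Ω, z t x < 0 → K * z t x ≤ heatOperator z t x)
    (hlat : ∀ t ∈ Icc 0 S, ∀ x ∈ frontier Ω, 0 ≤ z t x) (hinit : ∀ x ∈ closure Ω, 0 ≤ z 0 x)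
    {T : ℝ} (hT : T ∈ Ico 0 S) {x : Fin n → ℝ} (hx : x ∈ closure Ω) : 0 ≤ z T x := by
  by_contra! hneg
  have hTS : Icc 0 T ⊆ Icc 0 S := Icc_subset_Icc_right hT.2.le
  have hcont : ContinuousOn (fun p : ℝ × (Fin n → ℝ) => Real.exp (-((K + 1) * p.1)) * z p.1 p.2)
      (Icc 0 T ×ˢ closure Ω) :=
    ContinuousOn.mul (by fun_prop) (hz.cont.mono (prod_mono hTS le_rfl))
  obtain ⟨⟨t₁, x₁⟩, ⟨ht₁ : t₁ ∈ Icc 0 T, hx₁ : x₁ ∈ closure Ω⟩, hmin⟩ :=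
    (isCompact_Icc.prod hΩb.isCompact_closure).exists_isMinOn
      ⟨(T, x), right_mem_Icc.2 hT.1, hx⟩ hcont
  have hz₁ : z t₁ x₁ < 0 :=
    neg_of_mul_neg_right ((hmin (show (T, x) ∈ Icc 0 T ×ˢ closure Ω from
      ⟨right_mem_Icc.2 hT.1, hx⟩)).trans_lt (mul_neg_of_pos_of_neg (Real.exp_pos _) hneg))
      (Real.exp_pos _).le
  have ht₁_pos : 0 < t₁ := ht₁.1.lt_of_ne (by rintro rfl; exact (hinit x₁ hx₁).not_gt hz₁)
  have hx₁_mem : x₁ ∈ Ω := by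
    by_contra hx₁_notMem
    have hx₁_frontier : x₁ ∈ frontier Ω := hΩ.frontier_eq ▸ ⟨hx₁, hx₁_notMem⟩
    exact (hlat t₁ (hTS ht₁) x₁ hx₁_frontier).not_gt hz₁
  have ht₁_mem : t₁ ∈ Ioo 0 S := ⟨ht₁_pos, ht₁.2.trans_lt hT.2⟩
  have hupper := hz.heatOperator_le_of_isMinOn_exp_mul hΩ ht₁_mem hx₁_mem
    (hmin.on_subset (prod_mono (Icc_subset_Icc_right ht₁.2) subset_closure))
  linarith [hheat t₁ ht₁_mem x₁ hx₁_mem hz₁]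

theorem nonneg_of_heatOperator_ge (hz : ParabolicRegular Ω S z) (hΩ : IsOpen Ω)
    (hΩb : Bornology.IsBounded Ω) {K : ℝ}
    (hheat : ∀ t ∈ Ioo 0 S, ∀ x ∈ Ω, z t x < 0 → K * z t x ≤ heatOperator z t x)
    (hlat : ∀ t ∈ Icc 0 S, ∀ x ∈ frontier Ω, 0 ≤ z t x) (hinit : ∀ x ∈ closure Ω, 0 ≤ z 0 x) :
    ∀ t ∈ Icc 0 S, ∀ x ∈ closure Ω, 0 ≤ z t x := by
  intro t ht x hx
  rcases ht.1.eq_or_lt with rfl | ht_pos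
  · exact hinit x hx
  have hclosure : closure (Ico 0 S) = Icc 0 S := closure_Ico (ht_pos.trans_le ht.2).ne
  refine le_on_closure (s := Ico 0 S) (f := fun _ => (0 : ℝ)) (g := fun t => z t x)
    (fun T hT => hz.nonneg_of_heatOperator_ge_of_lt hΩ hΩb hheat hlat hinit hT hx)
    continuousOn_const ?_ (hclosure ▸ ht)
  rw [hclosure]
  exact hz.cont.comp (f := fun t => (t, x)) (by fun_prop) fun t ht => ⟨ht, hx⟩

end ParabolicRegular

theorem IsClassicalSolution.nonneg {c f g : ℝ → (Fin n → ℝ) → ℝ} {m : ℝ}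
    (hz : IsClassicalSolution Ω S c f g z) (hΩ : IsOpen Ω) (hΩb : Bornology.IsBounded Ω)
    (hc : ∀ t ∈ Ioo 0 S, ∀ x ∈ Ω, m ≤ c t x) (hf : ∀ t ∈ Ioo 0 S, ∀ x ∈ Ω, 0 ≤ f t x)
    (hg : ∀ t ∈ Icc 0 S, ∀ x ∈ frontier Ω, 0 ≤ g t x) :
    ∀ t ∈ Icc 0 S, ∀ x ∈ closure Ω, 0 ≤ z t x := by
  refine hz.nonneg_of_heatOperator_ge (K := -m) hΩ hΩb (fun t ht x hx hneg => ?_)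
    (fun t ht x hx => (hg t ht x hx).trans_eq (hz.lateral t ht x hx).symm)
    (fun x hx => (hz.initial x hx).ge)
  rw [hz.heatOperator_eq ht hx]
  linarith [hf t ht x hx, mul_le_mul_of_nonpos_right (hc t ht x hx) hneg.le]

end MinimumPrinciple

section Comparison

variable {n : ℕ} {Ω : Set (Fin n → ℝ)} {S : ℝ} {F : ℝ → (Fin n → ℝ) → ℝ → ℝ}

/-- `F(t,x,u)` is Lipschitz in `u` on bounded intervals, uniformly in `(t,x) ∈ (0,S) × Ω`. -/
def LocallyLipschitzInU (Ω : Set (Fin n → ℝ)) (S : ℝ) (F : ℝ → (Fin n → ℝ) → ℝ → ℝ) : Prop :=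
  ∀ M : ℝ, ∃ K : ℝ≥0, ∀ t ∈ Ioo 0 S, ∀ x ∈ Ω, LipschitzOnWith K (F t x) (Icc (-M) M)

theorem C1InU.locallyLipschitzInU (hF : C1InU Ω S F) (hΩb : Bornology.IsBounded Ω) :
    LocallyLipschitzInU Ω S F := by
  intro M
  obtain ⟨K, hK⟩ := (isCompact_Icc.prod
    (hΩb.isCompact_closure.prod isCompact_Icc)).exists_bound_of_continuousOn
      (hF.2.2.mono (prod_mono_right (prod_mono_right (subset_univ (Icc (-M) M)))))
  refine ⟨K.toNNReal, fun t ht x hx => ?_⟩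
  replace ht := Ioo_subset_Icc_self ht
  replace hx := subset_closure hx
  refine (convex_Icc (-M) M).lipschitzOnWith_of_nnnorm_deriv_le
    (fun u _ => hF.2.1 t ht x hx u) fun u hu => ?_
  exact NNReal.le_toNNReal_of_coe_le (hK (t, x, u) ⟨ht, hx, hu⟩)

theorem ParabolicRegular.exists_abs_le {u : ℝ → (Fin n → ℝ) → ℝ} (hu : ParabolicRegular Ω S u)
    (hΩb : Bornology.IsBounded Ω) :
    ∃ M, ∀ t ∈ Icc 0 S, ∀ x ∈ closure Ω, |u t x| ≤ M := by
  obtain ⟨M, hM⟩ :=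
    (isCompact_Icc.prod hΩb.isCompact_closure).exists_bound_of_continuousOn hu.cont
  exact ⟨M, fun t ht x hx => hM (t, x) ⟨ht, hx⟩⟩

theorem le_of_heatOperator_add_le {u w : ℝ → (Fin n → ℝ) → ℝ} (hΩ : IsOpen Ω)
    (hΩb : Bornology.IsBounded Ω) (hF : LocallyLipschitzInU Ω S F)
    (hu : ParabolicRegular Ω S u) (hw : ParabolicRegular Ω S w)
    (hheat : ∀ t ∈ Ioo 0 S, ∀ x ∈ Ω,
      heatOperator u t x + F t x (u t x) ≤ heatOperator w t x + F t x (w t x))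
    (hlat : ∀ t ∈ Icc 0 S, ∀ x ∈ frontier Ω, u t x ≤ w t x)
    (hinit : ∀ x ∈ closure Ω, u 0 x ≤ w 0 x) :
    ∀ t ∈ Icc 0 S, ∀ x ∈ closure Ω, u t x ≤ w t x := by
  obtain ⟨Mu, hMu⟩ := hu.exists_abs_le hΩb
  obtain ⟨Mw, hMw⟩ := hw.exists_abs_le hΩb
  obtain ⟨K, hK⟩ := hF (max Mu Mw)
  suffices hsub : ∀ t ∈ Icc 0 S, ∀ x ∈ closure Ω, 0 ≤ (w - u) t x from
    fun t ht x hx => sub_nonneg.1 (hsub t ht x hx)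
  refine (hw.sub hu hΩ).nonneg_of_heatOperator_ge (K := K) hΩ hΩb (fun t ht x hx hneg => ?_)
    (fun t ht x hx => sub_nonneg.2 (hlat t ht x hx)) (fun x hx => sub_nonneg.2 (hinit x hx))
  have hbound_u := abs_le.1 ((hMu t (Ioo_subset_Icc_self ht) x (subset_closure hx)).trans
    (le_max_left Mu Mw))
  have hbound_w := abs_le.1 ((hMw t (Ioo_subset_Icc_self ht) x (subset_closure hx)).trans
    (le_max_right Mu Mw))
  have hlip : F t x (w t x) - F t x (u t x) ≤ K * |w t x - u t x| :=
    (le_abs_self _).trans ((hK t ht x hx).dist_le_mul _ hbound_w _ hbound_u)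
  rw [abs_of_neg (show w t x - u t x < 0 from hneg)] at hlip
  rw [hw.heatOperator_sub hu hΩ ht hx]
  change K * (w t x - u t x) ≤ _
  linarith [hheat t ht x hx]

end Comparison

section SemilinearBounds

variable {n : ℕ} {Ω : Set (Fin n → ℝ)} {S κ r : ℝ} {χ y v : ℝ → (Fin n → ℝ) → ℝ}
  {F : ℝ → (Fin n → ℝ) → ℝ → ℝ}

theorem mul_le_of_isSectorBounded (hΩ : IsOpen Ω) (hΩb : Bornology.IsBounded Ω)
    (hF : LocallyLipschitzInU Ω S F) (hFκ : ∀ t ∈ Ioo 0 S, ∀ x ∈ Ω, IsSectorBounded κ (F t x))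
    (hr : 0 ≤ r) (hχ : ∀ t ∈ Icc 0 S, ∀ x ∈ frontier Ω, 0 ≤ χ t x)
    (hy : IsClassicalSolution Ω S (fun _ _ => κ) (fun _ _ => 0) χ y)
    (hv : IsClassicalSolution Ω S (fun _ _ => 0) (fun t x => -F t x (v t x))
      (fun t x => r * χ t x) v) :
    ∀ t ∈ Icc 0 S, ∀ x ∈ closure Ω, r * y t x ≤ v t x := by
  have hy_nonneg := hy.nonneg (m := κ) hΩ hΩb (by simp) (by simp) hχ
  refine le_of_heatOperator_add_le (u := r • y) hΩ hΩb hF (hy.smul r) hv.toParabolicRegular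
    ?_ ?_ ?_
  · intro t ht x hx
    have hFy := (hFκ t ht x hx).le_mul (r * y t x)
      (mul_nonneg hr (hy_nonneg t (Ioo_subset_Icc_self ht) x (subset_closure hx)))
    rw [heatOperator_smul, hy.heatOperator_eq ht hx, hv.heatOperator_eq ht hx]
    simp only [Pi.smul_apply, smul_eq_mul]
    linarith
  · intro t ht x hx
    simp [hy.lateral t ht x hx, hv.lateral t ht x hx]
  · intro x hx
    simp [hy.initial x hx, hv.initial x hx]

theorem le_neg_mul_of_isSectorBounded (hΩ : IsOpen Ω) (hΩb : Bornology.IsBounded Ω)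
    (hF : LocallyLipschitzInU Ω S F) (hFκ : ∀ t ∈ Ioo 0 S, ∀ x ∈ Ω, IsSectorBounded κ (F t x))
    (hr : 0 ≤ r) (hχ : ∀ t ∈ Icc 0 S, ∀ x ∈ frontier Ω, 0 ≤ χ t x)
    (hy : IsClassicalSolution Ω S (fun _ _ => κ) (fun _ _ => 0) χ y)
    (hv : IsClassicalSolution Ω S (fun _ _ => 0) (fun t x => -F t x (v t x))
      (fun t x => -r * χ t x) v) :
    ∀ t ∈ Icc 0 S, ∀ x ∈ closure Ω, v t x ≤ -r * y t x := by
  have hy_nonneg := hy.nonneg (m := κ) hΩ hΩb (by simp) (by simp) hχ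
  refine le_of_heatOperator_add_le (w := -r • y) hΩ hΩb hF hv.toParabolicRegular (hy.smul (-r))
    ?_ ?_ ?_
  · intro t ht x hx
    have hFy := (hFκ t ht x hx).mul_le (-r * y t x) (mul_nonpos_of_nonpos_of_nonneg
      (neg_nonpos.2 hr) (hy_nonneg t (Ioo_subset_Icc_self ht) x (subset_closure hx)))
    rw [heatOperator_smul, hy.heatOperator_eq ht hx, hv.heatOperator_eq ht hx]
    simp only [Pi.smul_apply, smul_eq_mul]
    linarith
  · intro t ht x hx
    simp [hy.lateral t ht x hx, hv.lateral t ht x hx]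
  · intro x hx
    simp [hy.initial x hx, hv.initial x hx]

theorem C2InU.isSectorBounded (hF : C2InU Ω S F)
    (hF0 : ∀ t ∈ Icc 0 S, ∀ x ∈ closure Ω, F t x 0 = 0)
    (hsign : ∀ t ∈ Icc 0 S, ∀ x ∈ closure Ω,
      (∀ u, 0 ≤ u → uDeriv2 F t x u ≤ 0) ∧ ∀ u, u ≤ 0 → 0 ≤ uDeriv2 F t x u)
    (hκ : ∀ t ∈ Icc 0 S, ∀ x ∈ closure Ω, uDeriv F t x 0 ≤ κ) :
    ∀ t ∈ Icc 0 S, ∀ x ∈ closure Ω, IsSectorBounded κ (F t x) :=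
  fun t ht x hx => .of_deriv_le (hF.1.2.1 t ht x hx) (hF0 t ht x hx) fun u =>
    (deriv_le_deriv_zero_of_deriv_deriv_sign (hF.2.1 t ht x hx) (hsign t ht x hx).1
      (hsign t ht x hx).2 u).trans (hκ t ht x hx)

end SemilinearBounds

section Barrier

variable {n : ℕ} {Ω : Set (Fin n → ℝ)} {S : ℝ}

/-- The plane exponential `e^{αt + b·x}`, an eigenfunction of `∂ₜ` and of every `∂ᵢ`. -/
noncomputable def planeExp (α : ℝ) (b : Fin n → ℝ) (t : ℝ) (x : Fin n → ℝ) : ℝ :=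
  Real.exp (α * t + b ⬝ᵥ x)

theorem continuous_planeExp (α : ℝ) (b : Fin n → ℝ) :
    Continuous fun p : ℝ × (Fin n → ℝ) => planeExp α b p.1 p.2 := by
  unfold planeExp dotProduct
  fun_prop

theorem hasDerivAt_planeExp_time (α : ℝ) (b : Fin n → ℝ) (t : ℝ) (x : Fin n → ℝ) :
    HasDerivAt (fun s => planeExp α b s x) (α * planeExp α b t x) t := by
  simpa [planeExp, mul_comm] using
    (((hasDerivAt_id t).const_mul α).add_const (b ⬝ᵥ x)).exp

theorem hasDerivAt_planeExp_update (α : ℝ) (b : Fin n → ℝ) (t : ℝ) (x : Fin n → ℝ) (i : Fin n) :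
    HasDerivAt (fun s => planeExp α b t (Function.update x i s)) (b i * planeExp α b t x)
      (x i) := by
  have hdot : HasDerivAt (fun s => b ⬝ᵥ Function.update x i s) (b ⬝ᵥ Pi.single i 1) (x i) :=
    HasDerivAt.fun_sum fun j _ => (hasDerivAt_pi.1 (hasDerivAt_update x i (x i)) j).const_mul (b j)
  simpa [planeExp, mul_comm] using (hdot.const_add (α * t)).exp

theorem timeDeriv_planeExp (α : ℝ) (b : Fin n → ℝ) :
    timeDeriv (planeExp α b) = α • planeExp α b := by
  ext t x
  exact (hasDerivAt_planeExp_time α b t x).deriv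

theorem spatialDeriv_planeExp (α : ℝ) (b : Fin n → ℝ) (i : Fin n) :
    spatialDeriv (planeExp α b) i = b i • planeExp α b := by
  ext t x
  exact (hasDerivAt_planeExp_update α b t x i).deriv

theorem spatialDeriv2_planeExp (α : ℝ) (b : Fin n → ℝ) (i j : Fin n) :
    spatialDeriv2 (planeExp α b) i j = (b j * b i) • planeExp α b := by
  ext t x
  simp only [spatialDeriv2, spatialDeriv_planeExp, spatialDeriv_smul, mul_smul]

theorem heatOperator_planeExp (α : ℝ) (b : Fin n → ℝ) (t : ℝ) (x : Fin n → ℝ) :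
    heatOperator (planeExp α b) t x = (α - b ⬝ᵥ b) * planeExp α b t x := by
  simp only [heatOperator, laplacian, timeDeriv_planeExp, spatialDeriv2_planeExp, Pi.smul_apply,
    smul_eq_mul, ← Finset.sum_mul, sub_mul, dotProduct]

theorem parabolicRegular_planeExp (Ω : Set (Fin n → ℝ)) (S α : ℝ) (b : Fin n → ℝ) :
    ParabolicRegular Ω S (planeExp α b) where
  cont := (continuous_planeExp α b).continuousOn
  diff_t t _ x _ := (hasDerivAt_planeExp_time α b t x).differentiableAt
  diff_x t _ x _ i := (hasDerivAt_planeExp_update α b t x i).differentiableAt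
  diff_xx t _ x _ i j := by
    rw [spatialDeriv_planeExp]
    exact ((hasDerivAt_planeExp_update α b t x i).differentiableAt).const_smul (b j)
  cont_t := by
    rw [timeDeriv_planeExp]
    exact ((continuous_planeExp α b).const_smul α).continuousOn
  cont_x i := by
    rw [spatialDeriv_planeExp]
    exact ((continuous_planeExp α b).const_smul (b i)).continuousOn
  cont_xx i j := by
    rw [spatialDeriv2_planeExp]
    exact ((continuous_planeExp α b).const_smul (b j * b i)).continuousOn

/-- The barrier `e^{-κt}(e^{λ²t + λxᵢ} - e^c)`, a solution of `∂ₜu - Δu + κu = 0` whose positivity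
set is a half-space advancing with speed `λ`. -/
noncomputable def barrier (κ lam c : ℝ) (i : Fin n) : ℝ → (Fin n → ℝ) → ℝ :=
  planeExp (lam ^ 2 - κ) (Pi.single i lam) - Real.exp c • planeExp (-κ) 0

theorem parabolicRegular_barrier (hΩ : IsOpen Ω) (S κ lam c : ℝ) (i : Fin n) :
    ParabolicRegular Ω S (barrier κ lam c i) :=
  (parabolicRegular_planeExp Ω S _ _).sub ((parabolicRegular_planeExp Ω S _ _).smul _) hΩ

theorem heatOperator_barrier (κ lam c : ℝ) (i : Fin n) {t : ℝ} (ht : 0 < t) (x : Fin n → ℝ) :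
    heatOperator (barrier κ lam c i) t x = -κ * barrier κ lam c i t x := by
  have hregular := parabolicRegular_planeExp (n := n) univ (t + 1)
  rw [barrier, (hregular _ _).heatOperator_sub ((hregular _ _).smul _) isOpen_univ
    ⟨ht, lt_add_one t⟩ (mem_univ x), heatOperator_smul, heatOperator_planeExp,
    heatOperator_planeExp, single_dotProduct, Pi.single_eq_same, zero_dotProduct]
  simp only [Pi.sub_apply, Pi.smul_apply, smul_eq_mul]
  ring

theorem barrier_pos_iff {κ lam c t : ℝ} {i : Fin n} {x : Fin n → ℝ} :
    0 < barrier κ lam c i t x ↔ c < lam ^ 2 * t + lam * x i := by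
  have hexp : barrier κ lam c i t x =
      Real.exp (lam ^ 2 * t + lam * x i - κ * t) - Real.exp (c - κ * t) := by
    simp only [barrier, planeExp, Pi.sub_apply, Pi.smul_apply, smul_eq_mul, single_dotProduct,
      zero_dotProduct, ← Real.exp_add]
    ring_nf
  rw [hexp, sub_pos, Real.exp_lt_exp, sub_lt_sub_iff_right]

theorem exists_barrier (hΩb : Bornology.IsBounded Ω) (κ : ℝ) (i : Fin n) (δ : ℝ) {m : ℝ}
    (hm : 0 < m) :
    ∃ lam c, ∀ x ∈ closure Ω, (∀ t, 0 < barrier κ lam c i t x → δ - m < t) ∧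
      ∀ t, δ ≤ t → 0 < barrier κ lam c i t x := by
  obtain ⟨R, hR_pos, hR⟩ := hΩb.closure.exists_pos_norm_le
  have hlam : 0 < 3 * R / m := by positivity
  have hlam_m : 3 * R / m * m = 3 * R := div_mul_cancel₀ _ hm.ne'
  set lam := 3 * R / m
  refine ⟨lam, lam * (lam * (δ - m) + R), fun x hx => ?_⟩
  have hxi := abs_le.1 ((norm_le_pi_norm x i).trans (hR x hx))
  have hpos_iff (t : ℝ) : 0 < barrier κ lam (lam * (lam * (δ - m) + R)) i t x ↔
      lam * (δ - m) + R < lam * t + x i := by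
    rw [barrier_pos_iff, sq, mul_assoc, ← mul_add, mul_lt_mul_iff_right₀ hlam]
  refine ⟨fun t ht => ?_, fun t ht => ?_⟩
  · rw [hpos_iff] at ht
    exact lt_of_mul_lt_mul_left (by linarith) hlam.le
  · rw [hpos_iff]
    linarith [mul_le_mul_of_nonneg_left ht hlam.le]

end Barrier

section Positivity

theorem exists_pos_forall_lt_imp_le {X : Type*} [TopologicalSpace X] {K : Set X} {a b δ : ℝ}
    {χ : ℝ → X → ℝ} (hK : IsCompact K) (hδ : a < δ)
    (hχc : ContinuousOn (fun p : ℝ × X => χ p.1 p.2) (Icc a b ×ˢ K))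
    (hχ : ∀ t ∈ Icc δ b, ∀ x ∈ K, 0 < χ t x) :
    ∃ m, 0 < m ∧ m ≤ δ - a ∧ ∀ t ∈ Icc a b, ∀ x ∈ K, δ - m < t → m ≤ χ t x := by
  -- `max (χ t x) (δ - t)` is positive for every `t`, and `δ - t < m` for the times that matter.
  have hpos : ∀ p ∈ Icc a b ×ˢ K, 0 < max (χ p.1 p.2) (δ - p.1) := by
    rintro ⟨t, x⟩ ⟨ht, hx⟩
    rcases lt_or_ge t δ with htδ | htδ
    · exact lt_max_of_lt_right (sub_pos.2 htδ)
    · exact lt_max_of_lt_left (hχ t ⟨htδ, ht.2⟩ x hx)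
  obtain ⟨m, hm, hle⟩ := (isCompact_Icc.prod hK).exists_forall_le' (hχc.sup (by fun_prop)) hpos
  refine ⟨min m (δ - a), lt_min hm (sub_pos.2 hδ), min_le_right _ _, fun t ht x hx htm => ?_⟩
  have htm' : δ - t < min m (δ - a) := sub_lt_comm.1 htm
  rcases le_max_iff.1 (hle (t, x) ⟨ht, hx⟩) with hχ_ge | hδ_ge
  · exact (min_le_left _ _).trans hχ_ge
  · exact absurd (htm'.trans_le (min_le_left _ _)) hδ_ge.not_gt

variable {n : ℕ} {Ω : Set (Fin n → ℝ)} {S κ δ : ℝ} {χ y : ℝ → (Fin n → ℝ) → ℝ}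

theorem IsClassicalSolution.pos
    (hy : IsClassicalSolution Ω S (fun _ _ => κ) (fun _ _ => 0) χ y) (i : Fin n)
    (hΩ : IsOpen Ω) (hΩb : Bornology.IsBounded Ω) (hδ : 0 < δ)
    (hχc : ContinuousOn (fun p : ℝ × (Fin n → ℝ) => χ p.1 p.2) (Icc 0 S ×ˢ frontier Ω))
    (hχ : ∀ t ∈ Icc 0 S, ∀ x ∈ frontier Ω, 0 ≤ χ t x)
    (hχpos : ∀ t ∈ Icc δ S, ∀ x ∈ frontier Ω, 0 < χ t x) :
    ∀ t ∈ Icc δ S, ∀ x ∈ closure Ω, 0 < y t x := by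
  obtain ⟨m, hm, hmδ, hχm⟩ := exists_pos_forall_lt_imp_le
    (hΩb.isCompact_closure.of_isClosed_subset isClosed_frontier frontier_subset_closure)
    hδ hχc hχpos
  obtain ⟨lam, c, hbarrier⟩ := exists_barrier hΩb κ i δ hm
  set W := barrier κ lam c i
  have hW : ParabolicRegular Ω S W := parabolicRegular_barrier hΩ S κ lam c i
  obtain ⟨M, hM_pos, hWM⟩ : ∃ M, 0 < M ∧ ∀ t ∈ Icc 0 S, ∀ x ∈ closure Ω, W t x ≤ M := by
    obtain ⟨M, hM⟩ := hW.exists_abs_le hΩb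
    exact ⟨max M 1, by positivity, fun t ht x hx =>
      (le_abs_self _).trans ((hM t ht x hx).trans (le_max_left M 1))⟩
  have hε : 0 < m / M := div_pos hm hM_pos
  suffices hcompare : ∀ t ∈ Icc 0 S, ∀ x ∈ closure Ω, 0 ≤ (y - (m / M) • W) t x from
    fun t ht x hx => (mul_pos hε ((hbarrier x hx).2 t ht.1)).trans_le
      (sub_nonneg.1 (hcompare t ⟨hδ.le.trans ht.1, ht.2⟩ x hx))
  refine (hy.sub (hW.smul (m / M)) hΩ).nonneg_of_heatOperator_ge (K := -κ) hΩ hΩb ?_ ?_ ?_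
  · intro t ht x hx _
    rw [hy.heatOperator_sub (hW.smul _) hΩ ht hx, hy.heatOperator_eq ht hx, heatOperator_smul,
      heatOperator_barrier κ lam c i ht.1]
    simp only [Pi.sub_apply, Pi.smul_apply, smul_eq_mul]
    linarith
  · intro t ht x hx
    have hx' := frontier_subset_closure hx
    refine sub_nonneg.2 ((hy.lateral t ht x hx).symm ▸ ?_)
    rcases le_or_gt (W t x) 0 with hW_nonpos | hW_pos
    · exact (mul_nonpos_of_nonneg_of_nonpos hε.le hW_nonpos).trans (hχ t ht x hx)
    · calc m / M * W t x ≤ m / M * M := by gcongr; exact hWM t ht x hx'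
        _ = m := div_mul_cancel₀ m hM_pos.ne'
        _ ≤ χ t x := hχm t ht x hx ((hbarrier x hx').1 t hW_pos)
  · intro x hx
    have hW_nonpos : W 0 x ≤ 0 := not_lt.1 fun hW_pos => by
      linarith [(hbarrier x hx).1 0 hW_pos]
    exact sub_nonneg.2 ((hy.initial x hx).symm ▸ mul_nonpos_of_nonneg_of_nonpos hε.le hW_nonpos)

end Positivity

end Paper

theorem statement8_general {n : ℕ} (hn : 0 < n) (Ω : Set (Fin n → ℝ)) (hΩo : IsOpen Ω)
    (hΩb : Bornology.IsBounded Ω) (hΩne : Ω.Nonempty) (S δ₁ r κ₀ : ℝ) (hδ₁ : 0 < δ₁)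
    (hδ₁S : δ₁ ≤ S) (hr : 0 ≤ r) (χ : ℝ → (Fin n → ℝ) → ℝ)
    (hχc : ContinuousOn (fun p : ℝ × (Fin n → ℝ) => χ p.1 p.2) (Icc 0 S ×ˢ frontier Ω))
    (hχ0 : ∀ t ∈ Icc 0 S, ∀ x ∈ frontier Ω, 0 ≤ χ t x)
    (hχpos : ∀ t ∈ Icc δ₁ S, ∀ x ∈ frontier Ω, 0 < χ t x)
    (F : ℝ → (Fin n → ℝ) → ℝ → ℝ) (hF : LocallyLipschitzInU Ω S F)
    (hFκ : ∀ t ∈ Ioo 0 S, ∀ x ∈ Ω, IsSectorBounded κ₀ (F t x))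
    (v : ℝ → ℝ → (Fin n → ℝ) → ℝ)
    (hv : ∀ lam ∈ ({-r, r} : Set ℝ), IsClassicalSolution Ω S (fun _ _ => (0 : ℝ))
      (fun t x => -F t x (v lam t x)) (fun t x => lam * χ t x) (v lam))
    (hvc : ∀ t ∈ Icc δ₁ S, ∀ x ∈ closure Ω, ContinuousOn (fun lam => v lam t x) (Icc (-r) r))
    (y : ℝ → (Fin n → ℝ) → ℝ)
    (hy : IsClassicalSolution Ω S (fun _ _ => κ₀) (fun _ _ => (0 : ℝ)) χ y) :
    0 < sInf ((fun p : ℝ × (Fin n → ℝ) => y p.1 p.2) '' (Icc δ₁ S ×ˢ closure Ω)) ∧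
    ∀ t ∈ Icc δ₁ S, ∀ x ∈ closure Ω,
      SurjOn (fun lam => v lam t x) (Icc (-r) r)
        (Icc (-(sInf ((fun p : ℝ × (Fin n → ℝ) => y p.1 p.2) ''
            (Icc δ₁ S ×ˢ closure Ω)) * r))
          (sInf ((fun p : ℝ × (Fin n → ℝ) => y p.1 p.2) '' (Icc δ₁ S ×ˢ closure Ω)) * r)) := by
  have hsub : Icc δ₁ S ⊆ Icc 0 S := Icc_subset_Icc_left hδ₁.le
  have himage : IsCompact ((fun p : ℝ × (Fin n → ℝ) => y p.1 p.2) '' (Icc δ₁ S ×ˢ closure Ω)) :=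
    (isCompact_Icc.prod hΩb.isCompact_closure).image_of_continuousOn
      (hy.cont.mono (prod_mono_left hsub))
  refine ⟨?_, fun t ht x hx => ?_⟩
  · obtain ⟨⟨t, x⟩, ⟨ht, hx⟩, hmin⟩ :=
      himage.sInf_mem (((nonempty_Icc.2 hδ₁S).prod hΩne.closure).image _)
    exact hmin ▸ hy.pos ⟨0, hn⟩ hΩo hΩb hδ₁ hχc hχ0 hχpos t ht x hx
  · have hinf := csInf_le himage.bddBelow (mem_image_of_mem _ (mk_mem_prod ht hx))
    have hinf_r := mul_le_mul_of_nonneg_right hinf hr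
    have hupper := mul_le_of_isSectorBounded hΩo hΩb hF hFκ hr hχ0 hy (hv r (by simp))
      t (hsub ht) x hx
    have hlower := le_neg_mul_of_isSectorBounded hΩo hΩb hF hFκ hr hχ0 hy (hv (-r) (by simp))
      t (hsub ht) x hx
    have hr_le : -r ≤ r := neg_le_self hr
    refine SurjOn.mono subset_rfl (Icc_subset_Icc ?_ ?_)
      ((hvc t ht x hx).surjOn_Icc (left_mem_Icc.2 hr_le) (right_mem_Icc.2 hr_le)) <;>
    linarith

/-- Lemma 3.1 of the paper: with the constant potential `κ₀` and `y` the
corresponding solution with boundary data `χ`, the constant `a₂ := inf_{[δ₁,S] × cl Ω} y` is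
strictly positive and the family `v_λ` attains every value of `[−a₂r, a₂r]` at every point of
`(δ₁,S) × Ω`. -/
theorem statement8 {n : ℕ} (hn : 2 ≤ n) (Ω : Set (Fin n → ℝ)) (hΩo : IsOpen Ω)
    (hΩb : Bornology.IsBounded Ω) (hΩc : IsConnected Ω)
    (S δ₁ δ₂ r κ₀ : ℝ) (hS : 0 < S) (hδ₁ : 0 < δ₁) (hδ₁S : δ₁ < S) (hδ₂ : 0 < δ₂)
    (hr : 0 < r) (hκ₀ : 0 ≤ κ₀)
    (χ : ℝ → (Fin n → ℝ) → ℝ)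
    (hχc : ContinuousOn (fun p : ℝ × (Fin n → ℝ) => χ p.1 p.2) (Icc 0 S ×ˢ frontier Ω))
    (hχ0 : ∀ t ∈ Icc 0 S, ∀ x ∈ frontier Ω, 0 ≤ χ t x)
    (hχδ : ∀ t ∈ Icc δ₁ S, ∀ x ∈ frontier Ω, χ t x = δ₂)
    (F : ℝ → (Fin n → ℝ) → ℝ → ℝ) (hF : C2InU Ω S F)
    (hF0 : ∀ t ∈ Icc 0 S, ∀ x ∈ closure Ω, F t x 0 = 0)
    (hFconc : ∀ t ∈ Icc 0 S, ∀ x ∈ closure Ω,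
      (∀ u : ℝ, 0 ≤ u → uDeriv2 F t x u ≤ 0) ∧ (∀ u : ℝ, u ≤ 0 → 0 ≤ uDeriv2 F t x u))
    (hFκ : ∀ t ∈ Icc 0 S, ∀ x ∈ closure Ω, uDeriv F t x 0 ≤ κ₀)
    (v v1 v2 : ℝ → ℝ → (Fin n → ℝ) → ℝ)
    (hfam : SemilinearFamily Ω S r χ F v v1 v2)
    (y : ℝ → (Fin n → ℝ) → ℝ)
    (hy : IsClassicalSolution Ω S (fun _ _ => κ₀) (fun _ _ => (0 : ℝ)) χ y) :
    0 < sInf ((fun p : ℝ × (Fin n → ℝ) => y p.1 p.2) '' (Icc δ₁ S ×ˢ closure Ω)) ∧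
    ∀ t ∈ Ioo δ₁ S, ∀ x ∈ Ω,
      ∀ s ∈ Icc (-(sInf ((fun p : ℝ × (Fin n → ℝ) => y p.1 p.2) ''
            (Icc δ₁ S ×ˢ closure Ω)) * r))
          (sInf ((fun p : ℝ × (Fin n → ℝ) => y p.1 p.2) '' (Icc δ₁ S ×ˢ closure Ω)) * r),
        ∃ lam ∈ Icc (-r) r, v lam t x = s := by
  have hsector := hF.isSectorBounded hF0 hFconc hFκ
  exact (statement8_general (by lia) Ω hΩo hΩb hΩc.nonempty S δ₁ r κ₀ hδ₁ hδ₁S.le hr.le χ hχc hχ0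
    (fun t ht x hx => hχδ t ht x hx ▸ hδ₂) F (hF.1.locallyLipschitzInU hΩb)
    (fun t ht x hx => hsector t (Ioo_subset_Icc_self ht) x (subset_closure hx)) v
    (fun lam hlam => hfam.sol lam (by grind))
    (fun t ht => hfam.cont_lam t (Icc_subset_Icc_left hδ₁.le ht)) y hy).imp_right
    fun h t ht x hx => h t (Ioo_subset_Icc_self ht) x (subset_closure hx)
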